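/- arXiv:1406.3062 — 5 statements merged into one kernel-verified Lean document; each statement's English description precedes it below -/
import Mathlib

section
/- Assume CH. Then there exists a Luzin set L ⊆ ℝ such that the Minkowski sum L + L is a Bernstein set. -/
open Cardinal MeasureTheory Set
open scoped Pointwise

/-- `I` is a σ-ideal on `ℝ`. -/
def IsSigmaIdeal (I : Set (Set ℝ)) : Prop :=
  ∅ ∈ I ∧ (∀ A B : Set ℝ, A ⊆ B → B ∈ I → A ∈ I) ∧
    ∀ f : ℕ → Set ℝ, (∀ n, f n ∈ I) → (⋃ n, f n) ∈ I

/-- The standing assumptions on the σ-ideal `I`: nontriviality, translation and scale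
invariance, Borel base and the Steinhaus property. -/
def StandingIdeal (I : Set (Set ℝ)) : Prop :=
  IsSigmaIdeal I ∧
  Set.univ ∉ I ∧
  (∀ x : ℝ, ∀ S ∈ I, (fun y => x + y) '' S ∈ I) ∧
  (∀ x : ℝ, ∀ S ∈ I, (fun y => x * y) '' S ∈ I) ∧
  (∀ S ∈ I, ∃ B ∈ I, MeasurableSet B ∧ S ⊆ B) ∧
  (∀ A B : Set ℝ, MeasurableSet A → MeasurableSet B → A ∉ I → B ∉ I →
    (interior (A - B)).Nonempty)

/-- `L` is an `I`-Luzin set. -/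
def IsLuzinFor (I : Set (Set ℝ)) (L : Set ℝ) : Prop :=
  Cardinal.mk L = Cardinal.continuum ∧ ∀ S ∈ I, (L ∩ S).Countable

/-- `L` is a strong `I`-Luzin set. -/
def IsStrongLuzinFor (I : Set (Set ℝ)) (L : Set ℝ) : Prop :=
  IsLuzinFor I L ∧ ∀ B : Set ℝ, MeasurableSet B → B ∉ I → ¬ (L ∩ B).Countable

/-- `L` is a Luzin set. -/
def IsLuzin (L : Set ℝ) : Prop :=
  Cardinal.mk L = Cardinal.continuum ∧ ∀ M : Set ℝ, IsMeagre M → (L ∩ M).Countable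

/-- `L` is a strong Luzin set. -/
def IsStrongLuzin (L : Set ℝ) : Prop :=
  IsLuzin L ∧ ∀ B : Set ℝ, MeasurableSet B → ¬ IsMeagre B → ¬ (L ∩ B).Countable

/-- `S` is a Sierpiński set. -/
def IsSierpinski (S : Set ℝ) : Prop :=
  Cardinal.mk S = Cardinal.continuum ∧ ∀ N : Set ℝ, volume N = 0 → (S ∩ N).Countable

/-- `S` is a strong Sierpiński set. -/
def IsStrongSierpinski (S : Set ℝ) : Prop :=
  IsSierpinski S ∧ ∀ B : Set ℝ, MeasurableSet B → 0 < volume B → ¬ (S ∩ B).Countable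

/-- `X` is a Bernstein set. -/
def IsBernstein (X : Set ℝ) : Prop :=
  ∀ P : Set ℝ, Perfect P → P.Nonempty → (P ∩ X).Nonempty ∧ (P ∩ Xᶜ).Nonempty

/-- `A ⊆ ℝ²` is completely `𝓜`-nonmeasurable. -/
def CompletelyMeagerNonmeasurable (A : Set (ℝ × ℝ)) : Prop :=
  ∀ B : Set (ℝ × ℝ), MeasurableSet B → ¬ IsMeagre B → (A ∩ B).Nonempty ∧ ¬ B ⊆ A

/-- `A ⊆ ℝ²` is completely `𝓝`-nonmeasurable. -/
def CompletelyNullNonmeasurable (A : Set (ℝ × ℝ)) : Prop :=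
  ∀ B : Set (ℝ × ℝ), MeasurableSet B → 0 < volume B → (A ∩ B).Nonempty ∧ ¬ B ⊆ A

/-- `n`-fold Minkowski sum (with `nFoldSum A 0 = {0}`). -/
def nFoldSum (A : Set ℝ) : ℕ → Set ℝ
  | 0 => {0}
  | n + 1 => nFoldSum A n + A

theorem aux_rec {ι T : Type} {r : ι → ι → Prop} (wf : WellFounded r)
    (Φ : (α : ι) → ((β : ι) → r β α → T) → T → Prop) (h : ∀ α g, ∃ t, Φ α g t) :
    ∃ F : ι → T, ∀ α, Φ α (fun β _ => F β) (F α) := by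
  choose G hG using h
  refine ⟨wf.fix G, fun α => ?_⟩
  rw [wf.fix_eq]
  exact hG _ _

theorem aux_countable_meagre {S : Set ℝ} (h : S.Countable) : IsMeagre S := by
  rw [← Set.biUnion_of_singleton S]
  have := h.to_subtype
  rw [Set.biUnion_eq_iUnion]
  refine isMeagre_iUnion fun x => ?_
  apply IsNowhereDense.isMeagre
  simp [IsNowhereDense]

theorem aux_preim {M : Set ℝ} (e : ℝ ≃ₜ ℝ) (h : IsMeagre M) : IsMeagre (e ⁻¹' M) :=
  h.preimage_of_isOpenMap e.continuous e.isOpenMap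

theorem aux_not_univ : ¬ IsMeagre (Set.univ : Set ℝ) :=
  not_isMeagre_of_isOpen isOpen_univ ⟨0, trivial⟩

theorem aux_step {M A Q P : Set ℝ} (hM : IsMeagre M) (hA : A.Countable) (hQ : Q.Countable)
    (hP : ¬ P.Countable) : ∃ t : ℝ × ℝ × ℝ, t.1 ∉ M ∧ t.2.1 ∉ M ∧ t.1 + t.2.1 ∈ P ∧ t.2.2 ∈ P ∧
      (∀ x ∈ A ∪ {t.1, t.2.1}, ∀ y ∈ A ∪ {t.1, t.2.1}, x + y ≠ t.2.2) ∧
      (∀ x ∈ ({t.1, t.2.1} : Set ℝ), ∀ y ∈ A ∪ {t.1, t.2.1}, x + y ∉ Q) := by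
  obtain ⟨p, hpP, hpQ⟩ : ∃ p ∈ P, p ∉ Q := by
    by_contra! h
    exact hP (hQ.mono h)
  set N : Set ℝ := M ∪ ((Q - A) ∪ (fun x => x / 2) '' Q) with hN
  have hNm : IsMeagre N := by
    refine hM.union (aux_countable_meagre ?_)
    exact (by rw [← Set.image2_sub]; exact hQ.image2 hA _ : (Q - A).Countable).union (hQ.image _)
  have hN2 : IsMeagre ((Homeomorph.subLeft p) ⁻¹' N) := aux_preim _ hNm
  obtain ⟨a, ha⟩ : ∃ a, a ∉ N ∪ ((Homeomorph.subLeft p) ⁻¹' N) := by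
    by_contra! h
    exact aux_not_univ ((hNm.union hN2).mono fun x _ => h x)
  have ha1 : a ∉ N := fun h => ha (Or.inl h)
  have ha2 : p - a ∉ N := fun h => ha (Or.inr h)
  obtain ⟨q, hqP, hq⟩ : ∃ q ∈ P, q ∉ (A ∪ {a, p - a}) + (A ∪ {a, p - a}) := by
    by_contra! h
    have hc : (A ∪ {a, p - a}).Countable := hA.union (by simp)
    exact hP ((by rw [← Set.image2_add]; exact hc.image2 hc _ : ((A ∪ {a, p - a}) + (A ∪ {a, p - a})).Countable).mono h)
  have key : ∀ c, c ∉ N → c ∉ M ∧ (∀ y ∈ A, c + y ∉ Q) ∧ c + c ∉ Q := by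
    intro c hc
    refine ⟨fun h => hc (Or.inl h), fun y hy h => hc (Or.inr (Or.inl ?_)),
      fun h => hc (Or.inr (Or.inr ⟨c + c, h, by simp⟩))⟩
    exact ⟨c + y, h, y, hy, by simp⟩
  obtain ⟨k1, k2, k3⟩ := key _ ha1
  obtain ⟨l1, l2, l3⟩ := key _ ha2
  refine ⟨(a, p - a, q), k1, l1, by simpa using hpP, hqP, ?_, ?_⟩
  · intro x hx y hy h
    exact hq ⟨x, hx, y, hy, h⟩
  · rintro x (rfl | rfl) y (hy | rfl | rfl)
    · exact k2 y hy
    · exact k3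
    · simpa using hpQ
    · exact l2 y hy
    · simpa using hpQ
    · exact l3

theorem aux_perfect {P : Set ℝ} (hP : Perfect P) (hn : P.Nonempty) : ¬ P.Countable := by
  obtain ⟨f, hf, -, hi⟩ := hP.exists_nat_bool_injection hn
  intro h
  have h1 : (Set.range f).Countable := h.mono hf
  have : Countable (ℕ → Bool) := by
    have := h1.to_subtype
    exact Function.Injective.countable (Set.rangeFactorization_injective.2 hi)
  have h2 := Cardinal.mk_le_aleph0_iff.2 this
  have h3 : Cardinal.mk (ℕ → Bool) = Cardinal.continuum := by
    rw [← Cardinal.power_def]; simp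
  rw [h3] at h2
  exact absurd h2 (not_le.2 Cardinal.aleph0_lt_continuum)

theorem stmt_15 (hCH : Cardinal.continuum = Cardinal.aleph 1) :
    ∃ L : Set ℝ, IsLuzin L ∧ IsBernstein (L + L) := by
  classical
  replace hCH : (Cardinal.continuum : Cardinal.{0}) = Cardinal.aleph 1 := by
    apply Cardinal.lift_injective
    rw [Cardinal.lift_continuum, Cardinal.lift_aleph, Ordinal.lift_one]
    exact hCH
  -- well order with countable initial segments
  obtain ⟨r, wo, hr⟩ := Cardinal.exists_ord_eq ℝ
  have hc : ∀ α, {β | r β α}.Countable := by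
    intro α
    have h1 := Cardinal.card_typein_lt (r := r) α hr
    rw [Cardinal.mk_real, hCH] at h1
    have h2 : Cardinal.mk {β | r β α} < Cardinal.aleph 1 := h1
    rw [← Cardinal.succ_aleph0, Order.lt_succ_iff] at h2
    exact Cardinal.le_aleph0_iff_set_countable.1 h2
  have hne : Nonempty {s : Set ℝ // MeasurableSet s} := ⟨⟨∅, MeasurableSet.empty⟩⟩
  obtain ⟨f, hf⟩ : ∃ f : ℝ → {s : Set ℝ // MeasurableSet s}, Function.Surjective f := by
    obtain ⟨b, hb, hgen⟩ := MeasurableSpace.CountablyGenerated.isCountablyGenerated (α := ℝ)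
    have h := MeasurableSpace.cardinal_measurableSet_le_continuum (s := b)
      ((Cardinal.le_aleph0_iff_set_countable.2 hb).trans Cardinal.aleph0_le_continuum)
    rw [← hgen, ← Cardinal.mk_real] at h
    obtain ⟨g⟩ := h
    exact ⟨Function.invFun g, Function.invFun_surjective g.injective⟩
  let M : ℝ → Set ℝ := fun α => if IsMeagre (f α).1 then (f α).1 else ∅
  let P : ℝ → Set ℝ := fun α => if (f α).1.Countable then univ else (f α).1
  have hM : ∀ α, IsMeagre (M α) := by
    intro α
    by_cases h : IsMeagre (f α).1
    · simp [M, h]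
    · simp [M, h, IsMeagre.empty]
  have hP : ∀ α, ¬ (P α).Countable := by
    intro α
    by_cases h : (f α).1.Countable
    · simp only [P, h, if_true]
      exact fun h => aux_not_univ (aux_countable_meagre h)
    · simp [P, h]
  obtain ⟨F, hF⟩ := aux_rec (T := ℝ × ℝ × ℝ) (r := r) wo.wf
    (fun α g t =>
      let A := ⋃ β : {β | r β α}, ({(g β.1 β.2).1, (g β.1 β.2).2.1} : Set ℝ)
      let Q := ⋃ β : {β | r β α}, ({(g β.1 β.2).2.2} : Set ℝ)
      let N := M α ∪ ⋃ β : {β | r β α}, M β.1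
      t.1 ∉ N ∧ t.2.1 ∉ N ∧ t.1 + t.2.1 ∈ P α ∧ t.2.2 ∈ P α ∧
      (∀ x ∈ A ∪ {t.1, t.2.1}, ∀ y ∈ A ∪ {t.1, t.2.1}, x + y ≠ t.2.2) ∧
      (∀ x ∈ ({t.1, t.2.1} : Set ℝ), ∀ y ∈ A ∪ {t.1, t.2.1}, x + y ∉ Q))
    (by
      intro α g
      have := (hc α).to_subtype
      refine aux_step ?_ ?_ ?_ (hP α)
      · exact (hM α).union (isMeagre_iUnion fun β => hM _)
      · exact Set.countable_iUnion fun β => by simp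
      · exact Set.countable_iUnion fun β => by simp)
  let C : ℝ → Set ℝ := fun α => {(F α).1, (F α).2.1}
  have hCc : ∀ α, (C α).Countable := fun α => by simp [C]
  let L : Set ℝ := ⋃ α, C α
  have hLM : ∀ γ, ∀ α, ¬ r α γ → ∀ x ∈ C α, x ∉ M γ := by
    intro γ α h x hx hxM
    obtain ⟨h1, h2, -⟩ := hF α
    have hxN : x ∈ M α ∪ ⋃ β : {β | r β α}, M β.1 := by
      rcases trichotomous_of r α γ with h' | rfl | h'
      · exact absurd h' h
      · exact Or.inl hxM
      · exact Or.inr (Set.mem_iUnion.2 ⟨⟨γ, h'⟩, hxM⟩)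
    rcases hx with rfl | rfl
    · exact h1 hxN
    · exact h2 hxN
  have hcov : ∀ S : Set ℝ, IsMeagre S → ∃ γ, S ⊆ M γ := by
    intro S hS
    obtain ⟨t, htS, hG, hD⟩ := mem_residual.1 hS
    obtain ⟨γ, hγ⟩ := hf ⟨tᶜ, hG.measurableSet.compl⟩
    have hm : IsMeagre (f γ).1 := by
      rw [hγ]
      show tᶜᶜ ∈ residual ℝ
      rw [compl_compl]
      exact mem_residual.2 ⟨t, subset_rfl, hG, hD⟩
    refine ⟨γ, ?_⟩
    simp only [M, hm, if_true]
    rw [hγ]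
    exact Set.subset_compl_comm.1 htS
  have hLL : ∀ S : Set ℝ, IsMeagre S → (L ∩ S).Countable := by
    intro S hS
    obtain ⟨γ, hγ⟩ := hcov S hS
    refine Set.Countable.mono ?_ ((hc γ).biUnion fun α _ => hCc α)
    rintro x ⟨hx, hxS⟩
    obtain ⟨α, hα⟩ := Set.mem_iUnion.1 hx
    by_cases h : r α γ
    · exact Set.mem_biUnion (show α ∈ {β | r β γ} from h) hα
    · exact absurd (hγ hxS) (hLM γ α h x hα)
  have hLu : ¬ L.Countable := by
    intro h
    obtain ⟨γ, hγ⟩ := hcov L (aux_countable_meagre h)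
    have hm : (F γ).1 ∈ C γ := Or.inl rfl
    exact hLM γ γ (irrefl_of r γ) _ hm (hγ (Set.mem_iUnion.2 ⟨γ, hm⟩))
  -- q avoidance
  have hq1 : ∀ γ α β, (r α γ ∨ α = γ) → (r β γ ∨ β = γ) → ∀ x ∈ C α, ∀ y ∈ C β,
      x + y ≠ (F γ).2.2 := by
    intro γ α β hα hβ x hx y hy
    obtain ⟨-, -, -, -, h, -⟩ := hF γ
    refine h x ?_ y ?_
    · rcases hα with h | rfl
      · exact Or.inl (Set.mem_iUnion.2 ⟨⟨α, h⟩, hx⟩)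
      · exact Or.inr hx
    · rcases hβ with h | rfl
      · exact Or.inl (Set.mem_iUnion.2 ⟨⟨β, h⟩, hy⟩)
      · exact Or.inr hy
  have hq2 : ∀ γ α β, r γ α → (r β α ∨ β = α) → ∀ x ∈ C α, ∀ y ∈ C β,
      x + y ≠ (F γ).2.2 := by
    intro γ α β hγ hβ x hx y hy he
    obtain ⟨-, -, -, -, -, h⟩ := hF α
    refine h x hx y ?_ (Set.mem_iUnion.2 ⟨⟨γ, hγ⟩, he⟩)
    rcases hβ with h | rfl
    · exact Or.inl (Set.mem_iUnion.2 ⟨⟨β, h⟩, hy⟩)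
    · exact Or.inr hy
  have hq : ∀ γ, (F γ).2.2 ∉ L + L := by
    rintro γ ⟨x, hx, y, hy, he⟩
    obtain ⟨α, hx⟩ := Set.mem_iUnion.1 hx
    obtain ⟨β, hy⟩ := Set.mem_iUnion.1 hy
    have he : x + y = (F γ).2.2 := he
    have he' : y + x = (F γ).2.2 := by rw [add_comm]; exact he
    have tr : ∀ {a b c}, r a b → r b c → r a c := fun h h' => trans_of r h h'
    rcases trichotomous_of r α β with h | h | h <;>
    rcases trichotomous_of r α γ with h1 | h1 | h1 <;>
    rcases trichotomous_of r β γ with h2 | h2 | h2 <;>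
    first
    | exact hq1 γ α β (by tauto) (by tauto) x hx y hy he
    | exact hq2 γ α β h1 (by tauto) x hx y hy he
    | exact hq2 γ β α h2 (by tauto) y hy x hx he'
    | (subst_vars; exact absurd h2 (irrefl_of r _))
    | (subst_vars; exact hq2 _ _ _ h2 (Or.inl h1) y hy x hx he')
    | exact hq2 γ α β h1 (Or.inl (tr h2 (by subst_vars; assumption))) x hx y hy he
    | exact hq2 γ β α (tr h1 h) (Or.inl h) y hy x hx he'
    | exact hq2 γ α β (tr h2 h) (Or.inl h) x hx y hy he
  refine ⟨L, ⟨?_, hLL⟩, ?_⟩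
  · apply le_antisymm
    · rw [← Cardinal.mk_real]; exact Cardinal.mk_set_le L
    · rw [hCH, ← Cardinal.succ_aleph0, Order.succ_le_iff]
      rw [← not_le]
      exact fun h => hLu (Cardinal.le_aleph0_iff_set_countable.1 h)
  · intro S hS hn
    have hnc := aux_perfect hS hn
    obtain ⟨γ, hγ⟩ := hf ⟨S, hS.closed.measurableSet⟩
    have hPS : P γ = S := by
      simp [P, hγ, hnc]
    obtain ⟨-, -, h1, h2, -, -⟩ := hF γ
    rw [hPS] at h1 h2
    refine ⟨⟨_, h1, ?_⟩, ⟨_, h2, hq γ⟩⟩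
    exact ⟨_, Set.mem_iUnion.2 ⟨γ, Or.inl rfl⟩, _, Set.mem_iUnion.2 ⟨γ, Or.inr rfl⟩, rfl⟩
end

section
/- Assume CH. Then there exists a Sierpiński set S ⊆ ℝ such that the Minkowski sum S + S is a Bernstein set. -/
open Cardinal MeasureTheory Set
open scoped Pointwise

lemma aux_step_s16 (S D N P : Set ℝ) (hS : S.Countable) (hD : D.Countable) (hN : volume N = 0)
    (hP : ¬ P.Countable) :
    ∃ v : ℝ × ℝ × ℝ, v.1 ∉ N ∧ v.2.1 ∉ N ∧ v.1 ∉ S ∧ v.1 + v.2.1 ∈ P ∧ v.2.2 ∈ P ∧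
      (∀ s ∈ S, v.1 + s ∉ D ∧ v.2.1 + s ∉ D) ∧ v.1 + v.1 ∉ D ∧ v.2.1 + v.2.1 ∉ D ∧
      v.1 + v.2.1 ∉ D ∧
      v.2.2 ∉ (S ∪ {v.1, v.2.1}) + (S ∪ {v.1, v.2.1}) := by
  obtain ⟨p, hpP, hpD⟩ : ∃ p ∈ P, p ∉ D := by
    by_contra! h
    exact hP (hD.mono h)
  let E : Set ℝ := S ∪ (image2 (fun d s => d - s) D S ∪ (image2 (fun d s => p - (d - s)) D S ∪
    ((fun d => d / 2) '' D ∪ (fun d => p - d / 2) '' D)))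
  have hE : E.Countable := hS.union ((hD.image2 hS _).union ((hD.image2 hS _).union
    ((hD.image _).union (hD.image _))))
  have hN' : volume ((fun x => p - x) ⁻¹' N) = 0 :=
    (Measure.measurePreserving_sub_left volume p).quasiMeasurePreserving.preimage_null hN
  have hT : volume (E ∪ (N ∪ (fun x => p - x) ⁻¹' N)) = 0 :=
    measure_union_null (hE.measure_zero _) (measure_union_null hN hN')
  obtain ⟨x, hx⟩ : ∃ x, x ∉ E ∪ (N ∪ (fun x => p - x) ⁻¹' N) := by
    by_contra! h
    rw [eq_univ_of_forall h] at hT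
    simp at hT
  simp only [mem_union, not_or, mem_preimage] at hx
  obtain ⟨hxE, hxN, hyN⟩ := hx
  simp only [E, mem_union, not_or] at hxE
  obtain ⟨h1, h2, h3, h4, h5⟩ := hxE
  have hC : (S ∪ {x, p - x}).Countable := hS.union (by simp)
  obtain ⟨d, hdP, hd⟩ : ∃ d ∈ P, d ∉ (S ∪ {x, p - x}) + (S ∪ {x, p - x}) := by
    by_contra! h
    exact hP (Countable.mono h (hC.image2 hC _))
  refine ⟨(x, p - x, d), hxN, hyN, h1, by simpa using hpP, hdP, ?_, ?_, ?_, by simpa using hpD, hd⟩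
  · intro s hs
    refine ⟨fun h => h2 ⟨_, h, s, hs, by simp⟩, fun h => h3 ⟨_, h, s, hs, by simp⟩⟩
  · intro h
    exact h4 ⟨_, h, by simp⟩
  · intro h
    exact h5 ⟨_, h, by simp⟩

lemma aux_rec_s16 {M V : Type} (r : M → M → Prop) (hr : WellFounded r)
    (Q : ∀ a : M, (∀ b, r b a → V) → V → Prop) (h : ∀ a g, ∃ v, Q a g v) :
    ∃ f : M → V, ∀ a, Q a (fun b _ => f b) (f a) := by
  choose F hF using h
  refine ⟨hr.fix F, fun a => ?_⟩
  rw [hr.fix_eq]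
  exact hF a _

lemma aux_unc (P : Set ℝ) (hP : Perfect P) (hn : P.Nonempty) : ¬ P.Countable := by
  obtain ⟨f, hf, -, hi⟩ := hP.exists_nat_bool_injection hn
  intro hc
  have h1 : (range f).Countable := hc.mono hf
  have h2 := Cardinal.mk_range_eq f hi
  have h3 := (Cardinal.le_aleph0_iff_set_countable).2 h1
  rw [h2] at h3
  have h4 : #(ℕ → Bool) = Cardinal.continuum := by simp
  rw [h4] at h3
  exact absurd h3 (not_le.2 Cardinal.aleph0_lt_continuum)

theorem stmt_16 (hCH : Cardinal.continuum = Cardinal.aleph 1) :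
    ∃ S : Set ℝ, IsSierpinski S ∧ IsBernstein (S + S) := by
  have hCH0 : Cardinal.continuum.{0} = Cardinal.aleph 1 := by
    apply Cardinal.lift_injective
    rw [Cardinal.lift_continuum, hCH, Cardinal.lift_aleph, Ordinal.lift_one]
  let M : Type := {s : Set ℝ // MeasurableSet s}
  have hM1 : #M ≤ Cardinal.continuum := by
    obtain ⟨b, hb, hb'⟩ := MeasurableSpace.CountablyGenerated.isCountablyGenerated (α := ℝ)
    have h := MeasurableSpace.cardinal_measurableSet_le_continuum
      ((Cardinal.le_aleph0_iff_set_countable.2 hb).trans Cardinal.aleph0_le_continuum)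
    rw [← hb'] at h
    exact h
  have hM2 : Cardinal.continuum ≤ #M := by
    rw [← Cardinal.mk_real]
    exact Cardinal.mk_le_of_injective (f := fun x : ℝ => (⟨{x}, measurableSet_singleton x⟩ : M))
      (fun x y h => singleton_injective (congrArg Subtype.val h))
  obtain ⟨r, wo, hr⟩ := Cardinal.ord_eq M
  have hcount : ∀ a : M, {b | r b a}.Countable := by
    intro a
    have h1 : Ordinal.typein r a < (#M).ord := by
      rw [hr]; exact Ordinal.typein_lt_type r a
    have h2 := Cardinal.lt_ord.1 h1
    have h3 : #{b | r b a} < Cardinal.aleph 1 := by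
      rw [← hCH0]; exact lt_of_lt_of_le h2 hM1
    rw [← Cardinal.le_aleph0_iff_set_countable]
    rw [← Cardinal.succ_aleph0] at h3
    exact Order.lt_succ_iff.1 h3
  let SS : ∀ a : M, (∀ b, r b a → ℝ × ℝ × ℝ) → Set ℝ := fun a g =>
    {s | ∃ b h, s = (g b h).1 ∨ s = (g b h).2.1}
  let DD : ∀ a : M, (∀ b, r b a → ℝ × ℝ × ℝ) → Set ℝ := fun a g =>
    {s | ∃ b h, s = (g b h).2.2}
  let NN : M → Set ℝ := fun a => ⋃ b ∈ insert a {b | r b a}, {z | volume b.1 = 0 ∧ z ∈ b.1}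
  have hSS : ∀ a g, (SS a g).Countable := by
    intro a g
    have := (hcount a).to_subtype
    refine ((countable_range (fun b : {b | r b a} => (g b.1 b.2).1)).union
      (countable_range (fun b : {b | r b a} => (g b.1 b.2).2.1))).mono ?_
    rintro s ⟨b, h, rfl | rfl⟩
    · exact Or.inl ⟨⟨b, h⟩, rfl⟩
    · exact Or.inr ⟨⟨b, h⟩, rfl⟩
  have hDD : ∀ a g, (DD a g).Countable := by
    intro a g
    have := (hcount a).to_subtype
    refine (countable_range (fun b : {b | r b a} => (g b.1 b.2).2.2)).mono ?_
    rintro s ⟨b, h, rfl⟩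
    exact ⟨⟨b, h⟩, rfl⟩
  have hNN : ∀ a, volume (NN a) = 0 := by
    intro a
    refine (measure_biUnion_null_iff ((hcount a).insert a)).2 fun b _ => ?_
    by_cases hb : volume b.1 = 0
    · exact measure_mono_null (fun z hz => hz.2) hb
    · simp [hb]
  obtain ⟨f, hf⟩ := aux_rec_s16 r wo.wf (fun a g v =>
      v.1 ∉ NN a ∧ v.2.1 ∉ NN a ∧ v.1 ∉ SS a g ∧
      (¬ a.1.Countable → v.1 + v.2.1 ∈ a.1 ∧ v.2.2 ∈ a.1) ∧
      (∀ s ∈ SS a g, v.1 + s ∉ DD a g ∧ v.2.1 + s ∉ DD a g) ∧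
      v.1 + v.1 ∉ DD a g ∧ v.2.1 + v.2.1 ∉ DD a g ∧ v.1 + v.2.1 ∉ DD a g ∧
      v.2.2 ∉ (SS a g ∪ {v.1, v.2.1}) + (SS a g ∪ {v.1, v.2.1})) (by
    intro a g
    by_cases ha : a.1.Countable
    · obtain ⟨v, h1, h2, h3, h4, h5, h6⟩ := aux_step_s16 (SS a g) (DD a g) (NN a) univ
        (hSS a g) (hDD a g) (hNN a) not_countable_univ
      exact ⟨v, h1, h2, h3, fun h => absurd ha h, h6⟩
    · obtain ⟨v, h1, h2, h3, h4, h5, h6⟩ := aux_step_s16 (SS a g) (DD a g) (NN a) a.1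
        (hSS a g) (hDD a g) (hNN a) ha
      exact ⟨v, h1, h2, h3, fun _ => ⟨h4, h5⟩, h6⟩)
  choose g1 g2 g3 g4 g5 g6 g7 g8 g9 using hf
  -- points of stage `a`
  let X : M → Set ℝ := fun a => {(f a).1, (f a).2.1}
  have hXS : ∀ a b s, r b a → s ∈ X b → s ∈ SS a (fun b _ => f b) := by
    rintro a b s h hs
    exact ⟨b, h, hs⟩
  have key1 : ∀ a b c s t, s ∈ X a → t ∈ X b → (r a c ∨ a = c) → (r b c ∨ b = c) →
      s + t ≠ (f c).2.2 := by
    intro a b c s t hs ht ha hb h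
    refine g9 c (h ▸ add_mem_add ?_ ?_)
    · rcases ha with ha | rfl
      · exact Or.inl (hXS _ _ _ ha hs)
      · exact Or.inr hs
    · rcases hb with hb | rfl
      · exact Or.inl (hXS _ _ _ hb ht)
      · exact Or.inr ht
  have key2 : ∀ a b c s t, s ∈ X a → t ∈ X b → r c a → r b a → s + t ≠ (f c).2.2 := by
    intro a b c s t hs ht hc hb h
    have := g5 a t (hXS _ _ _ hb ht)
    rcases hs with rfl | rfl
    · exact this.1 ⟨c, hc, h⟩
    · exact this.2 ⟨c, hc, h⟩
  have key3 : ∀ a c s t, s ∈ X a → t ∈ X a → r c a → s + t ≠ (f c).2.2 := by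
    intro a c s t hs ht hc h
    rcases hs with rfl | rfl <;> rcases ht with rfl | rfl
    · exact g6 a ⟨c, hc, h⟩
    · exact g8 a ⟨c, hc, h⟩
    · exact g8 a ⟨c, hc, by rw [add_comm]; exact h⟩
    · exact g7 a ⟨c, hc, h⟩
  have key : ∀ a b c s t, s ∈ X a → t ∈ X b → s + t ≠ (f c).2.2 := by
    intro a b c s t hs ht
    rcases trichotomous_of r a b with hab | rfl | hab
    · rcases trichotomous_of r c b with hc | rfl | hc
      · rw [add_comm]; exact key2 b a c t s ht hs hc hab
      · exact key1 _ _ _ s t hs ht (Or.inl hab) (Or.inr rfl)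
      · exact key1 _ _ _ s t hs ht (Or.inl (_root_.trans hab hc)) (Or.inl hc)
    · rcases trichotomous_of r c a with hc | rfl | hc
      · exact key3 a c s t hs ht hc
      · exact key1 _ _ _ s t hs ht (Or.inr rfl) (Or.inr rfl)
      · exact key1 _ _ _ s t hs ht (Or.inl hc) (Or.inl hc)
    · rcases trichotomous_of r c a with hc | rfl | hc
      · exact key2 a b c s t hs ht hc hab
      · exact key1 _ _ _ s t hs ht (Or.inr rfl) (Or.inl hab)
      · exact key1 _ _ _ s t hs ht (Or.inl hc) (Or.inl (_root_.trans hab hc))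
  refine ⟨⋃ a, X a, ⟨?_, ?_⟩, ?_⟩
  · apply le_antisymm
    · rw [← Cardinal.mk_real]; exact Cardinal.mk_set_le _
    · refine hM2.trans (Cardinal.mk_le_of_injective
        (f := fun a : M => (⟨(f a).1, mem_iUnion.2 ⟨a, Or.inl rfl⟩⟩ : (⋃ a, X a : Set ℝ))) ?_)
      intro a b h
      have h : (f a).1 = (f b).1 := by simpa using h
      rcases trichotomous_of r a b with hab | hab | hab
      · exact absurd ⟨a, hab, Or.inl h.symm⟩ (g3 b)
      · exact hab
      · exact absurd ⟨b, hab, Or.inl h⟩ (g3 a)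
  · intro N hN
    let B : M := ⟨toMeasurable volume N, measurableSet_toMeasurable _ _⟩
    have hB : volume B.1 = 0 := by rw [← hN]; exact measure_toMeasurable N
    refine (hSS B (fun b _ => f b)).mono ?_
    rintro s ⟨hs, hsN⟩
    obtain ⟨a, ha⟩ := mem_iUnion.1 hs
    have hsB : s ∈ B.1 := subset_toMeasurable _ _ hsN
    by_cases hab : r a B
    · exact hXS _ _ _ hab ha
    · exfalso
      have hBa : B ∈ insert a {b | r b a} := by
        rcases trichotomous_of r a B with h | h | h
        · exact absurd h hab
        · exact Or.inl h.symm
        · exact Or.inr h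
      have : s ∈ NN a := mem_biUnion hBa ⟨hB, hsB⟩
      rcases ha with rfl | rfl
      · exact g1 a this
      · exact g2 a this
  · intro P hP hn
    have hu := aux_unc P hP hn
    let a : M := ⟨P, hP.closed.measurableSet⟩
    obtain ⟨h1, h2⟩ := g4 a hu
    refine ⟨⟨_, h1, add_mem_add (mem_iUnion.2 ⟨a, Or.inl rfl⟩) (mem_iUnion.2 ⟨a, Or.inr rfl⟩)⟩,
      ⟨_, h2, ?_⟩⟩
    rintro ⟨s, hs, t, ht, h⟩
    obtain ⟨b, hb⟩ := mem_iUnion.1 hs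
    obtain ⟨c, hc⟩ := mem_iUnion.1 ht
    exact key b c a s t hb hc h
end

section
/- There exist sets R, P ⊆ ℝ such that R is comeager and Lebesgue null, P is a perfect (nonempty, closed, with no isolated points) nowhere dense Lebesgue null set, and R + P ⊆ R. -/
open Cardinal MeasureTheory Set
open scoped Pointwise

/-- Distance to the nearest integer of `3 ^ (n ^ 2) * x`. -/
noncomputable def nrm17 (n : ℕ) (x : ℝ) : ℝ := ‖(((3 : ℝ) ^ (n ^ 2) * x : ℝ) : UnitAddCircle)‖

lemma nrm17_add (n : ℕ) (x y : ℝ) : nrm17 n (x + y) ≤ nrm17 n x + nrm17 n y := by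
  unfold nrm17
  rw [mul_add, AddCircle.coe_add]
  exact norm_add_le _ _

lemma nrm17_cont (n : ℕ) : Continuous (nrm17 n) := by
  unfold nrm17
  exact ((AddCircle.continuous_mk' (1 : ℝ)).comp (continuous_const.mul continuous_id)).norm

lemma coe_int17 (z : ℤ) : ((z : ℝ) : UnitAddCircle) = 0 := by
  rw [AddCircle.coe_eq_zero_iff]
  exact ⟨z, by simp⟩

lemma norm_coe17 (x : ℝ) : ‖(x : UnitAddCircle)‖ ≤ |x| := by
  rw [UnitAddCircle.norm_eq]
  simpa using round_le x 0

def R17 : Set ℝ := {x | ∃ C : ℕ, ∃ᶠ n in Filter.atTop, nrm17 n x ≤ C * (1 / 2 : ℝ) ^ n}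

lemma null_circle17 (C : ℕ) : volume {y : UnitAddCircle |
    ∃ᶠ n in Filter.atTop, ‖((3 : ℤ) ^ (n ^ 2)) • y‖ ≤ C * (1 / 2 : ℝ) ^ n} = 0 := by
  have h := measure_limsup_atTop_eq_zero (μ := (volume : Measure UnitAddCircle))
    (s := fun n : ℕ => {y : UnitAddCircle | ‖((3 : ℤ) ^ (n ^ 2)) • y‖ ≤ C * (1 / 2 : ℝ) ^ n}) ?_
  · rw [Filter.limsup_eq_iInf_iSup_of_nat] at h
    rw [← h]
    congr 1
    ext y
    simp [Filter.frequently_atTop]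
  · have hb : ∀ n : ℕ, volume {y : UnitAddCircle |
        ‖((3 : ℤ) ^ (n ^ 2)) • y‖ ≤ C * (1 / 2 : ℝ) ^ n} ≤
        ENNReal.ofReal (2 * (C * (1 / 2 : ℝ) ^ n)) := by
      intro n
      have hmp := MeasureTheory.Measure.measurePreserving_zsmul (volume : Measure UnitAddCircle)
        (n := (3 : ℤ) ^ (n ^ 2)) (by positivity)
      have := hmp.measure_preimage
        (s := Metric.closedBall (0 : UnitAddCircle) (C * (1 / 2 : ℝ) ^ n))
        Metric.isClosed_closedBall.measurableSet.nullMeasurableSet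
      rw [AddCircle.volume_closedBall] at this
      have h2 : {y : UnitAddCircle | ‖((3 : ℤ) ^ (n ^ 2)) • y‖ ≤ C * (1 / 2 : ℝ) ^ n} =
        (fun y : UnitAddCircle => ((3 : ℤ) ^ (n ^ 2)) • y) ⁻¹'
          Metric.closedBall (0 : UnitAddCircle) (C * (1 / 2 : ℝ) ^ n) := by
        ext y; simp
      rw [h2, this]
      exact ENNReal.ofReal_le_ofReal (min_le_right _ _)
    refine ne_top_of_le_ne_top ?_ (ENNReal.tsum_le_tsum hb)
    refine Summable.tsum_ofReal_ne_top ?_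
    exact (summable_geometric_two.mul_left _).mul_left _

lemma null_R17 : volume R17 = 0 := by
  have : R17 = ⋃ C : ℕ, ⋃ a : ℤ, ((fun x : ℝ => (x : UnitAddCircle)) ⁻¹' {y : UnitAddCircle |
    ∃ᶠ n in Filter.atTop, ‖((3 : ℤ) ^ (n ^ 2)) • y‖ ≤ C * (1 / 2 : ℝ) ^ n}) ∩
      Ioc (a : ℝ) (a + 1) := by
    simp_rw [← inter_iUnion, iUnion_Ioc_intCast, inter_univ]
    ext x
    simp only [R17, nrm17, mem_ofPred_eq, mem_iUnion, mem_preimage, ← AddCircle.coe_zsmul,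
      zsmul_eq_mul]
    push_cast
    rfl
  rw [this, measure_iUnion_null_iff]
  intro C
  rw [measure_iUnion_null_iff]
  intro a
  have h := (UnitAddCircle.measurePreserving_mk (a : ℝ)).quasiMeasurePreserving.preimage_null
    (null_circle17 C)
  rwa [Measure.restrict_apply₀' measurableSet_Ioc.nullMeasurableSet] at h

lemma comeagre_R17 : IsMeagre R17ᶜ := by
  rw [IsMeagre, compl_compl]
  have hk : ∀ k : ℕ, (⋃ n : ℕ, ⋃ (_ : k ≤ n), {x | nrm17 n x < (1 / 2 : ℝ) ^ n}) ∈
      residual ℝ := by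
    intro k
    apply residual_of_dense_open
    · exact isOpen_iUnion fun n => isOpen_iUnion fun _ =>
        isOpen_lt (nrm17_cont n) continuous_const
    · rw [Metric.dense_iff]
      intro x ε hε
      obtain ⟨n, hn⟩ := exists_pow_lt_of_lt_one hε (show (1 / 3 : ℝ) < 1 by norm_num)
      set m := max n k with hm
      have h3 : (0 : ℝ) < 3 ^ (m ^ 2) := by positivity
      refine ⟨⌊(3 : ℝ) ^ (m ^ 2) * x⌋ / 3 ^ (m ^ 2), ?_, ?_⟩
      · have hl : (1 / 3 : ℝ) ^ (m ^ 2) ≤ (1 / 3) ^ n :=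
          pow_le_pow_of_le_one (by norm_num) (by norm_num) (by nlinarith [le_max_left n k])
        have e : (⌊(3 : ℝ) ^ (m ^ 2) * x⌋ : ℝ) / 3 ^ (m ^ 2) - x =
          - (Int.fract ((3 : ℝ) ^ (m ^ 2) * x) * (1 / 3) ^ (m ^ 2)) := by
          rw [Int.fract, one_div_pow]; field_simp; ring
        rw [Metric.mem_ball, Real.dist_eq, e, abs_neg, abs_of_nonneg
          (mul_nonneg (Int.fract_nonneg _) (by positivity))]
        have := Int.fract_lt_one ((3 : ℝ) ^ (m ^ 2) * x)
        have h4 : (0 : ℝ) < (1 / 3) ^ (m ^ 2) := by positivity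
        nlinarith
      · simp only [mem_iUnion]
        refine ⟨m, le_max_right _ _, ?_⟩
        rw [mem_ofPred_eq, nrm17, mul_div_cancel₀ _ h3.ne', coe_int17, norm_zero]
        positivity
  filter_upwards [countable_iInter_mem.2 hk] with x hx
  refine ⟨1, Filter.frequently_atTop.2 fun k => ?_⟩
  simp only [mem_iInter, mem_iUnion] at hx
  obtain ⟨n, hn, h⟩ := hx k
  have h2 : nrm17 n x < (1 / 2 : ℝ) ^ n := h
  refine ⟨n, hn, ?_⟩
  push_cast
  linarith

def T17 : Set ℝ := {x | ∀ n, nrm17 n x ≤ (1 / 2 : ℝ) ^ n}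

lemma closed_T17 : IsClosed T17 := by
  have : T17 = ⋂ n, {x | nrm17 n x ≤ (1 / 2 : ℝ) ^ n} := by ext; simp [T17]
  rw [this]
  exact isClosed_iInter fun n => isClosed_le (nrm17_cont n) continuous_const

lemma T17_sub : T17 ⊆ R17 := fun x hx =>
  ⟨1, (Filter.Eventually.of_forall fun n => by simpa using hx n).frequently⟩

lemma R17_add : R17 + T17 ⊆ R17 := by
  rintro _ ⟨x, ⟨C, hC⟩, p, hp, rfl⟩
  refine ⟨C + 1, hC.mono fun n hn => ?_⟩
  have := nrm17_add n x p
  have := hp n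
  push_cast
  linarith

def spread17 (g : ℕ → Bool) (k : ℕ) : Bool := if k.sqrt ^ 2 = k then g k.sqrt else false

lemma spread17_inj : Function.Injective spread17 := by
  intro f g h
  ext n
  have := congrFun h (n ^ 2)
  simp only [spread17, Nat.sqrt_eq', if_true] at this
  rw [this]

lemma spread17_mem (g : ℕ → Bool) : cantorFunction (1 / 3) (spread17 g) ∈ T17 := by
  intro n
  set f := spread17 g with hf
  have hs := summable_cantor_function f (c := 1 / 3) (by norm_num) (by norm_num)
  have hsplit := hs.sum_add_tsum_nat_add ((n + 1) ^ 2)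
  have hint : ∃ z : ℤ, (3 : ℝ) ^ (n ^ 2) *
      ∑ k ∈ Finset.range ((n + 1) ^ 2), cantorFunctionAux (1 / 3) f k = z := by
    have : ∀ k ∈ Finset.range ((n + 1) ^ 2), ∃ z : ℤ,
        (3 : ℝ) ^ (n ^ 2) * cantorFunctionAux (1 / 3) f k = z := by
      intro k hk
      rw [Finset.mem_range] at hk
      by_cases hfk : f k = true
      · rw [cantorFunctionAux_true hfk]
        have hsq : k.sqrt ^ 2 = k := by
          by_contra hne
          simp [hf, spread17, hne] at hfk
        have hle : k ≤ n ^ 2 := by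
          rw [← hsq] at hk ⊢
          have : k.sqrt < n + 1 := lt_of_pow_lt_pow_left₀ 2 (by omega) hk
          exact Nat.pow_le_pow_left (by omega) 2
        refine ⟨3 ^ (n ^ 2 - k), ?_⟩
        push_cast
        rw [one_div_pow, mul_one_div, div_eq_iff (by positivity), ← pow_add,
          Nat.sub_add_cancel hle]
      · exact ⟨0, by rw [cantorFunctionAux_false (by simpa using hfk)]; simp⟩
    choose! z hz using this
    refine ⟨∑ k ∈ Finset.range ((n + 1) ^ 2), z k, ?_⟩
    rw [Finset.mul_sum, Finset.sum_congr rfl hz]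
    push_cast
    rfl
  obtain ⟨z, hz⟩ := hint
  set t := ∑' k, cantorFunctionAux (1 / 3) f (k + (n + 1) ^ 2) with ht
  have ht0 : 0 ≤ t := tsum_nonneg fun k => cantorFunctionAux_nonneg (by norm_num)
  have hg : HasSum (fun k : ℕ => (1 / 3 : ℝ) ^ k * (1 / 3) ^ ((n + 1) ^ 2))
      ((1 - 1 / 3)⁻¹ * (1 / 3) ^ ((n + 1) ^ 2)) :=
    (hasSum_geometric_of_lt_one (by norm_num) (by norm_num)).mul_right _
  have ht1 : t ≤ (1 - 1 / 3)⁻¹ * (1 / 3) ^ ((n + 1) ^ 2) := by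
    refine hasSum_le ?_ ((summable_nat_add_iff ((n + 1) ^ 2)).2 hs).hasSum hg
    intro k
    rw [← pow_add]
    by_cases hfk : f (k + (n + 1) ^ 2) = true
    · rw [cantorFunctionAux_true hfk]
    · rw [cantorFunctionAux_false (by simpa using hfk)]
      positivity
  have e : cantorFunction (1 / 3) f = ∑ k ∈ Finset.range ((n + 1) ^ 2),
      cantorFunctionAux (1 / 3) f k + t := hsplit.symm
  rw [nrm17, e, mul_add, hz, AddCircle.coe_add, coe_int17, zero_add]
  refine (norm_coe17 _).trans ?_
  rw [abs_of_nonneg (by positivity)]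
  calc (3 : ℝ) ^ (n ^ 2) * t ≤ 3 ^ (n ^ 2) * ((1 - 1 / 3)⁻¹ * (1 / 3) ^ ((n + 1) ^ 2)) := by
        gcongr
    _ = 1 / 2 * (1 / 9) ^ n := by
        have : (n + 1) ^ 2 = n ^ 2 + 2 * n + 1 := by ring
        rw [this, pow_add, pow_add, pow_mul]
        have h1 : (3 : ℝ) ^ (n ^ 2) * (1 / 3) ^ (n ^ 2) = 1 := by
          rw [← mul_pow]; norm_num
        have h2 : ((1 / 3 : ℝ) ^ 2) = 1 / 9 := by norm_num
        rw [h2]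
        linear_combination (1 / 2 * (1 / 9 : ℝ) ^ n) * h1
    _ ≤ (1 / 2) ^ n := by
        have h1 : (1 / 9 : ℝ) ^ n ≤ (1 / 2) ^ n :=
          pow_le_pow_left₀ (by norm_num) (by norm_num) n
        have h2 : (0 : ℝ) ≤ (1 / 9) ^ n := by positivity
        linarith

lemma unc_T17 : ¬ T17.Countable := by
  intro h
  have hinj : Function.Injective fun g => cantorFunction (1 / 3) (spread17 g) :=
    (cantorFunction_injective (by norm_num) (by norm_num)).comp spread17_inj
  have h2 : (range fun g => cantorFunction (1 / 3) (spread17 g)).Countable :=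
    h.mono (range_subset_iff.2 spread17_mem)
  have h3 : Countable (ℕ → Bool) := by
    have := h2.to_subtype
    exact (Equiv.ofInjective _ hinj).countable_iff.2 this
  have h4 := Cardinal.mk_le_aleph0_iff.2 h3
  have h5 : Cardinal.mk (ℕ → Bool) = Cardinal.continuum := by
    rw [← Cardinal.power_def, Cardinal.mk_bool, Cardinal.mk_nat, Cardinal.two_power_aleph0]
  rw [h5] at h4
  exact absurd h4 (not_le.2 Cardinal.aleph0_lt_continuum)

theorem stmt_17 :
    ∃ R P : Set ℝ, IsMeagre Rᶜ ∧ volume R = 0 ∧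
      Perfect P ∧ P.Nonempty ∧ IsNowhereDense P ∧ volume P = 0 ∧
      R + P ⊆ R := by
  obtain ⟨P, hP, hne, hsub⟩ :=
    exists_perfect_nonempty_of_isClosed_of_not_countable closed_T17 unc_T17
  have h0 : volume P = 0 := measure_mono_null (hsub.trans T17_sub) null_R17
  refine ⟨R17, P, comeagre_R17, null_R17, hP, hne, ?_, h0,
    (add_subset_add_left hsub).trans R17_add⟩
  rw [hP.closed.isNowhereDense_iff]
  exact volume.interior_eq_empty_of_null h0
end

section
/- For every Lebesgue null set A ⊆ ℝ there exists a perfect set P ⊆ ℝ (nonempty, closed, with no isolated points) such that for every natural number n ≥ 1, the set A + ⊕ⁿP = A + P + ⋯ + P (n copies of P) is Lebesgue null. -/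
open Cardinal MeasureTheory Set
open scoped Pointwise

lemma cover_aux (A : Set ℝ) (hA : volume A = 0) (e : ℕ → ENNReal) (he : ∀ j, 0 < e j) :
    ∃ (V : ℕ → Set ℝ) (δ : ℕ → ℝ), (∀ j, 0 < δ j) ∧ A ⊆ ⋃ j, V j ∧
      ∀ j, volume (Metric.thickening (δ j) (V j)) ≤ e j := by
  obtain ⟨U, hAU, hUo, hU⟩ := A.exists_isOpen_lt_of_lt (min (e 0) 1) (μ := volume)
    (by rw [hA]; exact lt_min (he 0) one_pos)
  have key : ∀ j : ℕ, ∃ r : ℝ, 0 < r ∧ r < 1 / (j + 1 : ℝ) ∧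
      volume (U ∩ Metric.thickening r Uᶜ) ≤ e j := by
    intro j
    have ht : Filter.Tendsto (fun i : ℕ => volume (U ∩ Metric.thickening (1 / (i + 1 : ℝ)) Uᶜ))
        Filter.atTop (nhds (volume (⋂ i : ℕ, U ∩ Metric.thickening (1 / (i + 1 : ℝ)) Uᶜ))) := by
      apply tendsto_measure_iInter_atTop
      · intro i
        exact (hUo.inter Metric.isOpen_thickening).measurableSet.nullMeasurableSet
      · intro a b hab
        apply inter_subset_inter_right
        apply Metric.thickening_mono
        exact Nat.one_div_le_one_div hab
      · refine ⟨0, ne_top_of_le_ne_top ENNReal.one_ne_top ?_⟩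
        exact (measure_mono inter_subset_left).trans (hU.le.trans (min_le_right _ _))
    have hz : (⋂ i : ℕ, U ∩ Metric.thickening (1 / (i + 1 : ℝ)) Uᶜ) = ∅ := by
      rw [eq_empty_iff_forall_notMem]
      intro x hx
      rw [mem_iInter] at hx
      have hxU := (hx 0).1
      obtain ⟨ρ, hρ, hb⟩ := Metric.isOpen_iff.1 hUo x hxU
      obtain ⟨i, hi⟩ := exists_nat_one_div_lt hρ
      obtain ⟨z, hz, hd⟩ := Metric.mem_thickening_iff.1 (hx i).2
      exact hz (hb (by rw [Metric.mem_ball, dist_comm]; exact hd.trans hi))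
    rw [hz, measure_empty] at ht
    have h1 := ht.eventually (ge_mem_nhds (he j))
    obtain ⟨i, hi, hij⟩ := (h1.and (Filter.eventually_gt_atTop j)).exists
    refine ⟨1 / (i + 1 : ℝ), by positivity, ?_, hi⟩
    exact Nat.one_div_lt_one_div hij
  choose r hr0 hr1 hr using key
  refine ⟨fun j => {x | x ∈ U ∧ x ∉ Metric.thickening (r (j+1) / 2) Uᶜ ∧
    (j = 0 ∨ x ∈ Metric.thickening (r j / 2) Uᶜ)}, fun j => min (r j / 2) (r (j+1) / 2),
    fun j => lt_min (half_pos (hr0 _)) (half_pos (hr0 _)), ?_, ?_⟩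
  · intro x hx
    have hxU := hAU hx
    have hex : ∃ j, x ∉ Metric.thickening (r (j+1) / 2) Uᶜ := by
      obtain ⟨ρ, hρ, hb⟩ := Metric.isOpen_iff.1 hUo x hxU
      obtain ⟨i, hi⟩ := exists_nat_one_div_lt hρ
      refine ⟨i, fun h => ?_⟩
      obtain ⟨z, hz, hd⟩ := Metric.mem_thickening_iff.1 h
      apply hz
      apply hb
      rw [Metric.mem_ball, dist_comm]
      have h2 := hr1 (i+1)
      have h3 : 1 / ((i+1 : ℕ) + 1 : ℝ) ≤ 1 / (i + 1 : ℝ) :=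
        Nat.one_div_le_one_div (Nat.le_succ i)
      have := hr0 (i+1)
      linarith
    classical
    refine mem_iUnion.2 ⟨Nat.find hex, hxU, Nat.find_spec hex, ?_⟩
    rcases Nat.eq_zero_or_pos (Nat.find hex) with h | h
    · exact Or.inl h
    · right
      have := Nat.find_min hex (Nat.sub_lt h one_pos)
      rw [not_not, show Nat.find hex - 1 + 1 = Nat.find hex by omega] at this
      exact this
  · intro j
    have hsub : ∀ y ∈ Metric.thickening (min (r j / 2) (r (j+1) / 2)) {x | x ∈ U ∧
        x ∉ Metric.thickening (r (j+1) / 2) Uᶜ ∧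
        (j = 0 ∨ x ∈ Metric.thickening (r j / 2) Uᶜ)},
        y ∈ U ∧ (j = 0 ∨ y ∈ Metric.thickening (r j) Uᶜ) := by
      intro y hy
      obtain ⟨x, ⟨hxU, hx1, hx2⟩, hd⟩ := Metric.mem_thickening_iff.1 hy
      have hd1 := hd.trans_le (min_le_left _ _)
      have hd2 := hd.trans_le (min_le_right _ _)
      constructor
      · by_contra hyU
        exact hx1 (Metric.mem_thickening_iff.2 ⟨y, hyU, by rwa [dist_comm]⟩)
      · refine hx2.imp id fun h => ?_
        obtain ⟨z, hz, hd'⟩ := Metric.mem_thickening_iff.1 h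
        refine Metric.mem_thickening_iff.2 ⟨z, hz, ?_⟩
        have := dist_triangle y x z
        linarith
    rcases Nat.eq_zero_or_pos j with h | h
    · subst h
      exact (measure_mono fun y hy => (hsub y hy).1).trans (hU.le.trans (min_le_left _ _))
    · refine le_trans (measure_mono ?_) (hr j)
      intro y hy
      exact ⟨(hsub y hy).1, (hsub y hy).2.resolve_left h.ne'⟩

lemma cover_io (A : Set ℝ) (hA : volume A = 0) (e : ℕ → ENNReal) (he : ∀ j, 0 < e j) :
    ∃ (V : ℕ → Set ℝ) (δ : ℕ → ℝ), (∀ j, 0 < δ j) ∧ (∀ x ∈ A, ∀ n, ∃ j, n ≤ j ∧ x ∈ V j) ∧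
      ∀ j, volume (Metric.thickening (δ j) (V j)) ≤ e j := by
  have := fun n : ℕ => cover_aux A hA (fun j => e (Nat.pair n j)) (fun j => he _)
  choose V δ hδ hV hm using this
  refine ⟨fun k => V k.unpair.1 k.unpair.2, fun k => δ k.unpair.1 k.unpair.2,
    fun k => hδ _ _, ?_, ?_⟩
  · intro x hx n
    obtain ⟨j, hj⟩ := mem_iUnion.1 (hV n hx)
    exact ⟨Nat.pair n j, Nat.left_le_pair n j, by simpa using hj⟩
  · intro k
    have := hm k.unpair.1 k.unpair.2
    simpa using this

lemma cantor_aux (η : ℕ → ℝ) (h0 : ∀ j, 0 < η j) (hanti : Antitone η) :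
    ∃ P : Set ℝ, Perfect P ∧ P.Nonempty ∧ ∀ j : ℕ, ∃ F : Finset ℝ, F.card ≤ 2 ^ j ∧
      ∀ p ∈ P, ∃ s ∈ F, |p - s| ≤ η j := by
  set d : ℕ → ℝ := fun i => η i * (1/2)^(i+1) with hd
  have hd0 : ∀ i, 0 < d i := fun i => mul_pos (h0 i) (by positivity)
  have hgeo : HasSum (fun i : ℕ => ((1:ℝ)/2)^(i+1)) 1 := by
    have := hasSum_geometric_two.mul_left (1/2 : ℝ)
    simpa [pow_succ, mul_comm] using this
  have hds : Summable d := by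
    refine Summable.of_nonneg_of_le (fun i => (hd0 i).le) (fun i => ?_)
      (hgeo.summable.mul_left (η 0))
    exact mul_le_mul_of_nonneg_right (hanti (Nat.zero_le i)) (by positivity)
  let g : (ℕ → Bool) → ℕ → ℝ := fun x i => if x i then d i else 0
  have hg0 : ∀ x i, 0 ≤ g x i := by
    intro x i; simp only [g]; split_ifs; exacts [(hd0 i).le, le_rfl]
  have hgd : ∀ x i, g x i ≤ d i := by
    intro x i; simp only [g]; split_ifs; exacts [le_rfl, (hd0 i).le]
  have hgs : ∀ x, Summable (g x) := fun x => Summable.of_nonneg_of_le (hg0 x) (hgd x) hds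
  let f : (ℕ → Bool) → ℝ := fun x => ∑' i, g x i
  have hf : Continuous f := by
    refine continuous_tsum (u := d) (fun i => ?_) hds (fun i x => ?_)
    · exact (continuous_of_discreteTopology (f := fun b : Bool => if b then d i else 0)).comp
        (continuous_apply i)
    · rw [Real.norm_of_nonneg (hg0 x i)]; exact hgd x i
  refine ⟨range f, ⟨(isCompact_range hf).isClosed, ?_⟩, range_nonempty f, ?_⟩
  · rintro _ ⟨x, rfl⟩
    rw [accPt_iff_nhds]
    intro u hu
    obtain ⟨ρ, hρ, hb⟩ := Metric.mem_nhds_iff.1 hu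
    obtain ⟨i, hi⟩ := (hds.tendsto_atTop_zero.eventually (gt_mem_nhds hρ)).exists
    have hdiff : |f (Function.update x i (!x i)) - f x| = d i := by
      have h1 : f (Function.update x i (!x i)) - f x
          = ∑' k, (g (Function.update x i (!x i)) k - g x k) :=
        ((hgs _).tsum_sub (hgs _)).symm
      rw [h1, tsum_eq_single i]
      · simp only [g, Function.update_self]
        cases x i <;> simp [abs_of_pos (hd0 i)]
      · intro k hk
        simp [g, Function.update_of_ne hk]
    refine ⟨f (Function.update x i (!x i)), ⟨hb ?_, mem_range_self _⟩, ?_⟩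
    · rw [Metric.mem_ball, Real.dist_eq, hdiff]; exact hi
    · intro h
      rw [h, sub_self, abs_zero] at hdiff
      exact (hd0 i).ne hdiff
  · intro j
    classical
    refine ⟨(Finset.range j).powerset.image (fun s => ∑ i ∈ s, d i), ?_, ?_⟩
    · exact Finset.card_image_le.trans (by simp)
    · rintro _ ⟨x, rfl⟩
      refine ⟨∑ i ∈ (Finset.range j).filter (fun i => x i = true), d i,
        Finset.mem_image_of_mem _ (by simp), ?_⟩
      have h1 : f x = ∑ i ∈ Finset.range j, g x i + ∑' i, g x (i + j) :=
        ((hgs x).sum_add_tsum_nat_add j).symm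
      rw [h1, Finset.sum_filter]
      simp only [g]
      rw [add_sub_cancel_left]
      have hs : Summable (fun i => g x (i + j)) := (summable_nat_add_iff j).2 (hgs x)
      have h2 : (∑' i, g x (i + j)) ≤ ∑' i : ℕ, η j * (1/2)^(i+1) := by
        refine hs.tsum_le_tsum (fun i => (hgd x _).trans ?_) (hgeo.summable.mul_left _)
        refine mul_le_mul (hanti (Nat.le_add_left j i)) ?_ (by positivity) (h0 j).le
        exact pow_le_pow_of_le_one (by norm_num) (by norm_num) (by omega)
      rw [tsum_mul_left, hgeo.tsum_eq, mul_one] at h2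
      rw [abs_of_nonneg (tsum_nonneg fun i => hg0 x (i + j))]
      exact h2

lemma nfold_cover (P : Set ℝ) (j : ℕ) (r : ℝ) (F : Finset ℝ) (hF : F.card ≤ 2 ^ j)
    (h : ∀ p ∈ P, ∃ s ∈ F, |p - s| ≤ r) (n : ℕ) :
    ∃ S : Finset ℝ, S.card ≤ 2 ^ (j * n) ∧ ∀ p ∈ nFoldSum P n, ∃ s ∈ S, |p - s| ≤ n * r := by
  classical
  induction n with
  | zero => exact ⟨{0}, by simp, fun p hp => ⟨0, by simp, by
      have : p = 0 := hp
      simp [this]⟩⟩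
  | succ n ih =>
    obtain ⟨S, hS, hc⟩ := ih
    refine ⟨S + F, ?_, ?_⟩
    · refine Finset.card_add_le.trans ((Nat.mul_le_mul hS hF).trans ?_)
      rw [← pow_add, Nat.mul_succ]
    · rintro _ ⟨a, ha, b, hb, rfl⟩
      obtain ⟨s, hs, h1⟩ := hc a ha
      obtain ⟨t, ht, h2⟩ := h b hb
      refine ⟨s + t, Finset.add_mem_add hs ht, ?_⟩
      have : (a + b) - (s + t) = (a - s) + (b - t) := by ring
      show |(a + b) - (s + t)| ≤ _
      rw [this]
      have := abs_add_le (a - s) (b - t)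
      push_cast
      linarith

theorem stmt_18 (A : Set ℝ) (hA : volume A = 0) :
    ∃ P : Set ℝ, Perfect P ∧ P.Nonempty ∧
      ∀ n : ℕ, 1 ≤ n → volume (A + nFoldSum P n) = 0 := by
  obtain ⟨V, δ, hδ, hV, hm⟩ := cover_io A hA (fun j => (2⁻¹ : ENNReal) ^ (j * j + j))
    (fun j => ENNReal.pow_pos (by simp) _)
  set c : ℕ → ℝ := fun j => min 1 (δ j / (j + 1)) with hc
  have hc0 : ∀ j, 0 < c j := fun j => lt_min one_pos (div_pos (hδ j) (by positivity))
  have hc1 : ∀ j, c j ≤ 1 := fun j => min_le_left _ _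
  set η : ℕ → ℝ := fun i => ∏ j ∈ Finset.range (i + 1), c j with hη
  have hη0 : ∀ i, 0 < η i := fun i => Finset.prod_pos fun j _ => hc0 j
  have hηa : Antitone η := by
    refine antitone_nat_of_succ_le fun i => ?_
    simp only [hη]
    rw [Finset.prod_range_succ _ (i+1)]
    exact mul_le_of_le_one_right (hη0 i).le (hc1 _)
  have hηc : ∀ i, η i ≤ δ i / (i + 1) := by
    intro i
    refine le_trans ?_ (min_le_right 1 _)
    simp only [hη]
    rw [Finset.prod_range_succ]
    exact mul_le_of_le_one_left (hc0 i).le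
      (Finset.prod_le_one (fun j _ => (hc0 j).le) fun j _ => hc1 j)
  obtain ⟨P, hP, hPn, hF⟩ := cantor_aux η hη0 hηa
  refine ⟨P, hP, hPn, fun n _ => ?_⟩
  have hbound : ∀ j, volume {x | n ≤ j ∧ x ∈ V j + nFoldSum P n} ≤ (2⁻¹ : ENNReal) ^ j := by
    intro j
    by_cases hnj : n ≤ j
    swap
    · simp [hnj]
    obtain ⟨F, hFc, hFp⟩ := hF j
    obtain ⟨S, hS, hSp⟩ := nfold_cover P j (η j) F hFc hFp n
    have hlt : n * η j < δ j := by
      have h1 := hηc j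
      rw [le_div_iff₀ (by positivity)] at h1
      have h2 : (n : ℝ) ≤ j := by exact_mod_cast hnj
      nlinarith [hη0 j]
    have hsub : {x | n ≤ j ∧ x ∈ V j + nFoldSum P n} ⊆
        ⋃ s ∈ S, (fun x => s + x) '' Metric.thickening (δ j) (V j) := by
      rintro _ ⟨_, v, hv, p, hp, rfl⟩
      obtain ⟨s, hs, h1⟩ := hSp p hp
      refine mem_iUnion₂.2 ⟨s, hs, v + (p - s), ?_, by ring⟩
      refine Metric.mem_thickening_iff.2 ⟨v, hv, ?_⟩
      rw [Real.dist_eq, add_sub_cancel_left]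
      exact h1.trans_lt hlt
    calc volume {x | n ≤ j ∧ x ∈ V j + nFoldSum P n}
        ≤ volume (⋃ s ∈ S, (fun x => s + x) '' Metric.thickening (δ j) (V j)) :=
          measure_mono hsub
      _ ≤ ∑ s ∈ S, volume ((fun x => s + x) '' Metric.thickening (δ j) (V j)) :=
          measure_biUnion_finset_le _ _
      _ ≤ ∑ s ∈ S, (2⁻¹ : ENNReal) ^ (j * j + j) := by
          refine Finset.sum_le_sum fun s _ => ?_
          rw [image_add_left, measure_preimage_add]
          exact hm j
      _ = S.card * (2⁻¹ : ENNReal) ^ (j * j + j) := by simp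
      _ ≤ 2 ^ (j * j) * (2⁻¹ : ENNReal) ^ (j * j + j) := by
          gcongr
          have : S.card ≤ 2 ^ (j * j) :=
            hS.trans (Nat.pow_le_pow_right two_pos (Nat.mul_le_mul_left j hnj))
          exact_mod_cast this
      _ = (2⁻¹ : ENNReal) ^ j := by
          rw [pow_add, ← mul_assoc, ← mul_pow, ENNReal.mul_inv_cancel two_ne_zero
            ENNReal.ofNat_ne_top, one_pow, one_mul]
  have hbc : volume {x | ∃ᶠ j in Filter.atTop, n ≤ j ∧ x ∈ V j + nFoldSum P n} = 0 := by
    apply measure_setOfPred_frequently_eq_zero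
    refine ne_top_of_le_ne_top ?_ (ENNReal.tsum_le_tsum hbound)
    rw [ENNReal.tsum_geometric]
    simp
  refine measure_mono_null ?_ hbc
  rintro _ ⟨a, ha, p, hp, rfl⟩
  refine Filter.frequently_atTop.2 fun m => ?_
  obtain ⟨j, hj, hja⟩ := hV a ha (max m n)
  exact ⟨j, (le_max_left _ _).trans hj, (le_max_right _ _).trans hj, add_mem_add hja hp⟩
end

section
/- For every Luzin set L ⊆ ℝ and every Sierpiński set S ⊆ ℝ, the Minkowski sum L + S is not a Bernstein set. -/
open Cardinal MeasureTheory Set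
open scoped Pointwise

theorem exists_compact_aux {A : Set ℝ} (hA : MeasurableSet A) (hc : ¬ A.Countable) :
    ∃ K ⊆ A, IsCompact K ∧ ¬ K.Countable := by
  have key : ∃ f : (ℕ → Bool) → ℝ, range f ⊆ A ∧ Continuous f ∧ Function.Injective f := by
    obtain ⟨t, hle, ht, hcl, -⟩ := hA.isClopenable
    obtain ⟨f, hf, hcont, hinj⟩ :=
      @IsClosed.exists_nat_bool_injection_of_not_countable ℝ t ht A hcl hc
    exact ⟨f, hf, continuous_le_rng hle hcont, hinj⟩
  obtain ⟨f, hf, hcont', hinj⟩ := key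
  refine ⟨range f, hf, isCompact_range hcont', ?_⟩
  intro h
  have h4 : Cardinal.mk (ℕ → Bool) = 2 ^ ℵ₀ := by simp
  have h1 : Countable (range f) := h.to_subtype
  have h2 : Countable (ℕ → Bool) := (rangeFactorization_injective.2 hinj).countable
  have h3 := Cardinal.mk_le_aleph0_iff.2 h2
  rw [h4] at h3
  exact absurd h3 (not_le.2 (Cardinal.cantor _))

theorem exists_null_compact_aux : ∃ K : Set ℝ, IsCompact K ∧ ¬ K.Countable ∧ volume K = 0 := by
  obtain ⟨K, hK, h1, h2⟩ := exists_compact_aux (A := {x : ℝ | Liouville x})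
    IsGδ.setOfPred_liouville.measurableSet (by
      intro h
      have h1 : {x : ℝ | Liouville x}ᶜ ∈ residual ℝ :=
        residual_of_dense_Gδ h.isGδ_compl (h.dense_compl ℝ)
      exact not_isMeagre_of_mem_residual
        (eventually_residual_liouville : {x : ℝ | Liouville x} ∈ residual ℝ) h1)
  exact ⟨K, h1, h2, measure_mono_null hK volume_setOfPred_liouville⟩

theorem meagre_aux {P : Set ℝ} (hP : IsClosed P) (h0 : volume P = 0) : IsMeagre P := by
  apply IsNowhereDense.isMeagre
  rw [hP.isNowhereDense_iff]
  exact Measure.interior_eq_empty_of_null h0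

open Filter Topology in
theorem residual_aux {P : Set ℝ} (hP : IsCompact P) (h0 : volume P = 0) :
    ∃ U : Set ℝ, IsMeagre Uᶜ ∧ volume (P - U) = 0 := by
  obtain ⟨δ, hδ, hsum⟩ := ENNReal.exists_pos_sum_of_countable' (ε := 1) one_ne_zero ℕ
  have hex : ∀ n : ℕ, ∃ r > 0, volume (Metric.cthickening r P) < δ n := by
    intro n
    have ht := tendsto_measure_cthickening_of_isCompact (μ := (volume : Measure ℝ)) hP
    rw [h0] at ht
    have h1 := (ht.mono_left (nhdsWithin_le_nhds (s := Ioi 0))).eventually_lt_const (hδ n)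
    obtain ⟨r, hr, hr'⟩ := (h1.and self_mem_nhdsWithin).exists
    exact ⟨r, hr', hr⟩
  choose r hr hr' using hex
  let q : ℕ → ℝ := TopologicalSpace.denseSeq ℝ
  let V : ℕ → Set ℝ := fun n => ⋃ k, Metric.ball (q (n + k)) (r (n + k))
  have hVo : ∀ n, IsOpen (V n) := fun n => isOpen_iUnion fun k => Metric.isOpen_ball
  have hVd : ∀ n, Dense (V n) := by
    intro n
    have hq : Dense (range q) := TopologicalSpace.denseRange_denseSeq ℝ
    have hfin : ((Finset.range n).image q : Set ℝ).Finite := Finset.finite_toSet _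
    refine (hq.sdiff_finite hfin).mono ?_
    rintro x ⟨⟨m, rfl⟩, hm⟩
    have hnm : n ≤ m := by
      by_contra h
      apply hm
      simp only [Finset.coe_image, Finset.coe_range]
      exact ⟨m, by simpa using h, rfl⟩
    obtain ⟨k, rfl⟩ := Nat.exists_eq_add_of_le hnm
    exact mem_iUnion.2 ⟨k, Metric.mem_ball_self (hr _)⟩
  refine ⟨⋂ n, V n, ?_, ?_⟩
  · rw [IsMeagre, compl_compl]
    exact countable_iInter_mem.2 fun n => residual_of_dense_open (hVo n) (hVd n)
  · let W : ℕ → Set ℝ := fun n => (fun x => x + q n) ⁻¹' Metric.cthickening (r n) P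
    have hW : volume (limsup W atTop) = 0 := by
      apply measure_limsup_atTop_eq_zero
      have : ∑' i, volume (W i) ≤ ∑' i, δ i := by
        refine ENNReal.tsum_le_tsum fun i => ?_
        simp only [W]
        rw [measure_preimage_add_right]
        exact (hr' i).le
      exact (this.trans_lt (hsum.trans ENNReal.one_lt_top)).ne
    refine measure_mono_null ?_ hW
    rintro x ⟨p, hp, u, hu, rfl⟩
    rw [mem_limsup_iff_frequently_mem, frequently_atTop]
    intro n
    obtain ⟨k, hk⟩ := mem_iUnion.1 (mem_iInter.1 hu n)
    refine ⟨n + k, by omega, ?_⟩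
    simp only [W, mem_preimage]
    refine Metric.mem_cthickening_of_dist_le _ p _ _ hp ?_
    rw [Metric.mem_ball, Real.dist_eq] at hk
    rw [Real.dist_eq]
    have : p - u + q (n + k) - p = -(u - q (n + k)) := by ring
    rw [this, abs_neg]
    exact hk.le

theorem countable_aux {L S P : Set ℝ} (hL : IsLuzin L) (hS : IsSierpinski S)
    (hP : IsCompact P) (h0 : volume P = 0) : (P ∩ (L + S)).Countable := by
  obtain ⟨U, hU, hPU⟩ := residual_aux hP h0
  have hL' := hL.2 _ hU
  have hS' := hS.2 _ hPU
  have h1 : (⋃ l ∈ L ∩ Uᶜ, (fun s => l + s) '' (S ∩ (fun s => l + s) ⁻¹' P)).Countable :=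
    hL'.biUnion fun l _ => (hS.2 _ (by rw [measure_preimage_add]; exact h0)).image _
  have h2 : (⋃ s ∈ S ∩ (P - U), (fun l => l + s) '' (L ∩ (fun l => l + s) ⁻¹' P)).Countable :=
    hS'.biUnion fun s _ => (hL.2 _ (meagre_aux
      (hP.isClosed.preimage (by fun_prop))
      (by rw [measure_preimage_add_right]; exact h0))).image _
  refine (h1.union h2).mono ?_
  rintro x ⟨hx, l, hl, s, hs, rfl⟩
  by_cases hlU : l ∈ U
  · right
    refine mem_biUnion (x := s) ⟨hs, l + s, hx, l, hlU, by simp⟩ ⟨l, ⟨hl, hx⟩, rfl⟩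
  · left
    refine mem_biUnion (x := l) ⟨hl, hlU⟩ ⟨s, ⟨hs, hx⟩, rfl⟩

theorem stmt_19 (L S : Set ℝ) (hL : IsLuzin L) (hS : IsSierpinski S) :
    ¬ IsBernstein (L + S) := by
  intro hB
  obtain ⟨P, hP, hPc, h0⟩ := exists_null_compact_aux
  have hc := countable_aux hL hS hP h0
  obtain ⟨K, hKs, hK, hKc⟩ := exists_compact_aux
    (hP.isClosed.measurableSet.diff hc.measurableSet)
    (fun h => hPc ((h.union hc).mono (by intro x hx; by_cases h : x ∈ L + S <;> simp [h, hx])))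
  obtain ⟨D, hD, hDn, hDK⟩ := exists_perfect_nonempty_of_isClosed_of_not_countable hK.isClosed hKc
  obtain ⟨x, hxD, hx⟩ := (hB D hD hDn).1
  have := hKs (hDK hxD)
  exact this.2 ⟨this.1, hx⟩
end
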